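/- Fix S ⊆ N and j ∉ S, and let T := S ∪ {j}. Define, for i, k ∉ S, P̃_{ik} := δ_{ik} − (1−β) A^S_{ik} and r̃_i := (1−β) r_i^S. Then 1 − P̃_{jj} = (1−β) A^S_{jj} ≠ 0, and the state-elimination update reproduces the corresponding quantities for T: for all i, k ∉ T, δ_{ik} − (1−β) A^T_{ik} = P̃_{ik} + P̃_{ij} P̃_{jk} / (1 − P̃_{jj}) and (1−β) r_i^T = r̃_i + r̃_j · P̃_{ij} / (1 − P̃_{jj}); moreover Σ_{k∉S} P̃_{ik} = 1 − (1−β) w_i^S for all i ∉ S. (One step of Proposition 8: the state-elimination algorithm computes the same quantities as conventional pivoting, equation (32) of the paper.) -/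

import Mathlib

open Matrix BigOperators
open scoped Classical

noncomputable section

/-- Transition matrix of the `S`-active policy: row `i` of `P` if `i ∈ S`,
the `i`-th standard unit row otherwise. -/
def PAct {N : Type*} [DecidableEq N] (P : Matrix N N ℝ) (S : Finset N) : Matrix N N ℝ :=
  fun i j => if i ∈ S then P i j else if i = j then 1 else 0

/-- Transition matrix of the `Sᶜ`-active policy. -/
def PPas {N : Type*} [DecidableEq N] (P : Matrix N N ℝ) (S : Finset N) : Matrix N N ℝ :=
  fun i j => if i ∈ S then (if i = j then 1 else 0) else P i j

/-- Basis matrix `B^S = I - β P^S`. -/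
def BMat {N : Type*} [Fintype N] [DecidableEq N] (β : ℝ) (P : Matrix N N ℝ) (S : Finset N) :
    Matrix N N ℝ := 1 - β • PAct P S

/-- Non-basic matrix `N^S = I - β P^{Sᶜ}`. -/
def NMat {N : Type*} [Fintype N] [DecidableEq N] (β : ℝ) (P : Matrix N N ℝ) (S : Finset N) :
    Matrix N N ℝ := 1 - β • PPas P S

/-- Basis inverse `H^S = (B^S)⁻¹`. -/
def HMat {N : Type*} [Fintype N] [DecidableEq N] (β : ℝ) (P : Matrix N N ℝ) (S : Finset N) :
    Matrix N N ℝ := (BMat β P S)⁻¹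

/-- Tableau matrix `A^S = N^S · H^S`. -/
def AMat {N : Type*} [Fintype N] [DecidableEq N] (β : ℝ) (P : Matrix N N ℝ) (S : Finset N) :
    Matrix N N ℝ := NMat β P S * HMat β P S

/-- Work measure `g^S = H^S · 1_S`. -/
def gWork {N : Type*} [Fintype N] [DecidableEq N] (β : ℝ) (P : Matrix N N ℝ) (S : Finset N) :
    N → ℝ := (HMat β P S).mulVec (fun j => if j ∈ S then 1 else 0)

/-- Reward measure `f^S = H^S · (R·1_S)`. -/
def fRew {N : Type*} [Fintype N] [DecidableEq N] (β : ℝ) (P : Matrix N N ℝ) (R : N → ℝ)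
    (S : Finset N) : N → ℝ := (HMat β P S).mulVec (fun j => if j ∈ S then R j else 0)

/-- Marginal work `w_i^S`. -/
def wMarg {N : Type*} [Fintype N] [DecidableEq N] (β : ℝ) (P : Matrix N N ℝ) (S : Finset N)
    (i : N) : ℝ :=
  if i ∈ S then (1 - β) * gWork β P S i
  else 1 + β * ∑ j ∈ S, P i j * gWork β P S j

/-- Marginal reward `r_i^S`. -/
def rMarg {N : Type*} [Fintype N] [DecidableEq N] (β : ℝ) (P : Matrix N N ℝ) (R : N → ℝ)
    (S : Finset N) (i : N) : ℝ :=
  if i ∈ S then (1 - β) * fRew β P R S i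
  else R i + β * ∑ j ∈ S, P i j * fRew β P R S j

/-- Marginal productivity rate `ν_i^S = r_i^S / w_i^S`. -/
def nuMarg {N : Type*} [Fintype N] [DecidableEq N] (β : ℝ) (P : Matrix N N ℝ) (R : N → ℝ)
    (S : Finset N) (i : N) : ℝ := rMarg β P R S i / wMarg β P S i

/-- Feasibility of a pair of row vectors `(x⁰, x¹)` for initial state `i`:
`x⁰, x¹ ≥ 0` and `(1-β) x⁰ + x¹ (I - β P) = e_i`. -/
def Feasible {N : Type*} [Fintype N] [DecidableEq N] (β : ℝ) (P : Matrix N N ℝ) (i : N)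
    (x0 x1 : N → ℝ) : Prop :=
  (∀ j, 0 ≤ x0 j) ∧ (∀ j, 0 ≤ x1 j) ∧
    (1 - β) • x0 + Matrix.vecMul x1 (1 - β • P) = Pi.single i 1

/-- Modified reward vector `R̂ = R - (I - βP)·Q`. -/
def Rhat {N : Type*} [Fintype N] [DecidableEq N] (β : ℝ) (P : Matrix N N ℝ) (R Q : N → ℝ) :
    N → ℝ := fun i => R i - ((1 - β • P).mulVec Q) i

/-- The transition-like quantity `P̃_{ik} = δ_{ik} - (1-β) A^S_{ik}` of the
state-elimination algorithm. -/
def Ptil {N : Type*} [Fintype N] [DecidableEq N] (β : ℝ) (P : Matrix N N ℝ)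
    (S : Finset N) (i k : N) : ℝ :=
  (if i = k then (1:ℝ) else 0) - (1 - β) * AMat β P S i k

/-!
Passing from `S` to `T = S ∪ {j}` exchanges row `j` of the pair `(B^S, N^S)`. For a single exchanged
row `b_j ↦ v`, the coordinates `a = u B⁻¹` of a row vector `u` in the basis of rows of `B` become
`a - (a_j / p_j) p` off `j` and `a_j / p_j` at `j`, where `p = v B⁻¹` has `p_j ≠ 0`. With `u` the
`i`-th row of `N^S` and `v` its `j`-th row this is the pivot formula for `A`. It passes to the
marginal rewards because `r_i^S = R_i - ∑_{k ∈ S} A_{ik} R_k`, and scaling by `1 - β` gives the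
state-elimination update. Finally `A 1 = 1`, since `B` and `N` both map `1` to `(1 - β) 1`.
-/

section RowExchange

variable {n K : Type*} [Fintype n] [DecidableEq n]

theorem vecMul_update_updateRow {m : Type*} [Ring K] (w : n → K) (B : Matrix n m K) (j : n)
    (v : m → K) (c : K) :
    Function.update w j c ᵥ* B.updateRow j v = w ᵥ* B - w j • B j + c • v := by
  have hrest : ∀ k ∈ Finset.univ.erase j,
      Function.update w j c k • B.updateRow j v k = w k • B k := fun k hk => by
    rw [Function.update_of_ne (Finset.ne_of_mem_erase hk),
      updateRow_ne (Finset.ne_of_mem_erase hk)]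
  rw [vecMul_eq_sum, vecMul_eq_sum, ← Finset.add_sum_erase _ _ (Finset.mem_univ j),
    ← Finset.add_sum_erase _ (fun k => w k • B k) (Finset.mem_univ j),
    Finset.sum_congr rfl hrest, Function.update_self, updateRow_self]
  abel

theorem det_updateRow_eq_det_mul_vecMul_inv [CommRing K] {B : Matrix n n K} (hB : IsUnit B.det)
    (j : n) (v : n → K) :
    (B.updateRow j v).det = B.det * (v ᵥ* B⁻¹) j := by
  rw [← cramer_transpose_apply, ← det_smul_inv_vecMul_eq_cramer_transpose B v hB, Pi.smul_apply,
    smul_eq_mul]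

theorem vecMul_inv_apply_ne_zero [Field K] {B : Matrix n n K} {j : n} {v : n → K}
    (hB : IsUnit B.det) (hB' : IsUnit (B.updateRow j v).det) : (v ᵥ* B⁻¹) j ≠ 0 := by
  rw [det_updateRow_eq_det_mul_vecMul_inv hB] at hB'
  exact right_ne_zero_of_mul hB'.ne_zero

theorem vecMul_inv_updateRow [Field K] {B : Matrix n n K} {j : n} {v : n → K}
    (hB : IsUnit B.det) (hB' : IsUnit (B.updateRow j v).det) (u : n → K) :
    u ᵥ* (B.updateRow j v)⁻¹ =
      Function.update (u ᵥ* B⁻¹ - ((u ᵥ* B⁻¹) j / (v ᵥ* B⁻¹) j) • v ᵥ* B⁻¹) j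
        ((u ᵥ* B⁻¹) j / (v ᵥ* B⁻¹) j) := by
  set c := (u ᵥ* B⁻¹) j / (v ᵥ* B⁻¹) j with hc
  set w := u ᵥ* B⁻¹ - c • v ᵥ* B⁻¹ with hw
  have hwj : w j = 0 := by
    simp [hw, hc, div_mul_cancel₀ _ (vecMul_inv_apply_ne_zero hB hB')]
  have hwB : w ᵥ* B = u - c • v := by
    rw [hw, sub_vecMul, smul_vecMul, vecMul_vecMul, vecMul_vecMul, nonsing_inv_mul B hB,
      vecMul_one, vecMul_one]
  have hu : Function.update w j c ᵥ* B.updateRow j v = u := by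
    rw [vecMul_update_updateRow, hwj, hwB, zero_smul, sub_zero, sub_add_cancel]
  rw [← hu, vecMul_vecMul, mul_nonsing_inv _ hB', vecMul_one]

end RowExchange

section Discounting

variable {n : Type*} [Fintype n] [DecidableEq n]

open scoped Matrix.Norms.Operator in
theorem isUnit_det_one_sub_smul_of_mem_rowStochastic {Q : Matrix n n ℝ} (hQ : Q ∈ rowStochastic ℝ n)
    {β : ℝ} (hβ : |β| < 1) : IsUnit (1 - β • Q).det := by
  have hrow (i : n) : ∑ j, ‖Q i j‖₊ = 1 := by
    rw [← NNReal.coe_inj, NNReal.coe_sum, NNReal.coe_one, ← sum_row_of_mem_rowStochastic hQ i]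
    exact Finset.sum_congr rfl fun j _ => Real.norm_of_nonneg (nonneg_of_mem_rowStochastic hQ)
  have hQ1 : ‖Q‖ ≤ 1 := by
    rw [linfty_opNorm_def]
    exact_mod_cast Finset.sup_le fun i _ => (hrow i).le
  have hlt : ‖β • Q‖ < 1 :=
    calc ‖β • Q‖ ≤ |β| * ‖Q‖ := norm_smul_le β Q
      _ ≤ |β| := mul_le_of_le_one_right (abs_nonneg β) hQ1
      _ < 1 := hβ
  exact (isUnit_iff_isUnit_det _).1 (isUnit_one_sub_of_norm_lt_one hlt)

theorem one_sub_smul_mulVec_one {K : Type*} [Ring K] {Q : Matrix n n K} (hQ : Q *ᵥ 1 = 1)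
    (β : K) : (1 - β • Q) *ᵥ 1 = (1 - β) • (1 : n → K) := by
  rw [sub_mulVec, smul_mulVec, one_mulVec, hQ, sub_smul, one_smul]

end Discounting

section Policies

variable {N : Type*} [DecidableEq N] {P : Matrix N N ℝ} {S : Finset N} {i j : N}

theorem PAct_apply_of_mem (hi : i ∈ S) : PAct P S i = P i :=
  funext fun _ => if_pos hi

theorem PAct_apply_of_notMem (hi : i ∉ S) : PAct P S i = (1 : Matrix N N ℝ) i :=
  funext fun _ => if_neg hi

theorem PPas_apply_of_mem (hi : i ∈ S) : PPas P S i = (1 : Matrix N N ℝ) i :=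
  funext fun _ => if_pos hi

theorem PPas_apply_of_notMem (hi : i ∉ S) : PPas P S i = P i :=
  funext fun _ => if_neg hi

theorem PAct_insert (hj : j ∉ S) : PAct P (insert j S) = (PAct P S).updateRow j (PPas P S j) := by
  ext i k
  by_cases hij : i = j
  · subst hij
    simp [PAct, PPas, hj]
  · simp [PAct, hij]

theorem PPas_insert_apply_of_ne (hij : i ≠ j) : PPas P (insert j S) i = PPas P S i := by
  ext k
  simp [PPas, hij]

variable [Fintype N]

theorem PAct_mulVec_one (hP : P *ᵥ 1 = 1) (S : Finset N) : PAct P S *ᵥ 1 = 1 := by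
  ext i
  by_cases hi : i ∈ S
  · rw [mulVec, PAct_apply_of_mem hi, ← mulVec, hP]
  · rw [mulVec, PAct_apply_of_notMem hi, ← mulVec, one_mulVec]

theorem PPas_mulVec_one (hP : P *ᵥ 1 = 1) (S : Finset N) : PPas P S *ᵥ 1 = 1 := by
  ext i
  by_cases hi : i ∈ S
  · rw [mulVec, PPas_apply_of_mem hi, ← mulVec, one_mulVec]
  · rw [mulVec, PPas_apply_of_notMem hi, ← mulVec, hP]

theorem PAct_mem_rowStochastic (hP : P ∈ rowStochastic ℝ N) (S : Finset N) :
    PAct P S ∈ rowStochastic ℝ N := by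
  refine mem_rowStochastic.2 ⟨fun i k => ?_, PAct_mulVec_one hP.2 S⟩
  unfold PAct
  split_ifs
  exacts [hP.1 i k, zero_le_one, le_rfl]

end Policies

section Tableau

variable {N : Type*} [Fintype N] [DecidableEq N] {P : Matrix N N ℝ} {β : ℝ} {S : Finset N}
  {i j : N}

theorem isUnit_det_BMat (hP : P ∈ rowStochastic ℝ N) (hβ : |β| < 1) (S : Finset N) :
    IsUnit (BMat β P S).det :=
  isUnit_det_one_sub_smul_of_mem_rowStochastic (PAct_mem_rowStochastic hP S) hβ

theorem BMat_insert (hj : j ∉ S) :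
    BMat β P (insert j S) = (BMat β P S).updateRow j (NMat β P S j) := by
  ext i k
  by_cases hij : i = j
  · subst hij
    simp [BMat, NMat, PAct_insert hj]
  · simp [BMat, PAct_insert hj, hij]

theorem NMat_insert_apply_of_ne (hij : i ≠ j) : NMat β P (insert j S) i = NMat β P S i := by
  ext k
  simp [NMat, PPas_insert_apply_of_ne hij]

theorem AMat_apply_eq_vecMul (i : N) : AMat β P S i = NMat β P S i ᵥ* (BMat β P S)⁻¹ :=
  mul_apply_eq_vecMul _ _ i

theorem AMat_self_ne_zero (hj : j ∉ S) (hS : IsUnit (BMat β P S).det)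
    (hT : IsUnit (BMat β P (insert j S)).det) : AMat β P S j j ≠ 0 := by
  rw [BMat_insert hj] at hT
  rw [AMat_apply_eq_vecMul]
  exact vecMul_inv_apply_ne_zero hS hT

theorem AMat_insert_apply (hj : j ∉ S) (hij : i ≠ j) (hS : IsUnit (BMat β P S).det)
    (hT : IsUnit (BMat β P (insert j S)).det) :
    AMat β P (insert j S) i =
      Function.update (AMat β P S i - (AMat β P S i j / AMat β P S j j) • AMat β P S j) j
        (AMat β P S i j / AMat β P S j j) := by
  rw [BMat_insert hj] at hT
  simp only [AMat_apply_eq_vecMul, BMat_insert hj, NMat_insert_apply_of_ne hij]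
  exact vecMul_inv_updateRow hS hT _

theorem AMat_mulVec_one (hP : P *ᵥ 1 = 1) (hβ : β ≠ 1) (hS : IsUnit (BMat β P S).det) :
    AMat β P S *ᵥ 1 = 1 := by
  have hN : (1 - β) • AMat β P S *ᵥ 1 = (1 - β) • (1 : N → ℝ) :=
    calc (1 - β) • AMat β P S *ᵥ 1 = AMat β P S *ᵥ BMat β P S *ᵥ 1 := by
          rw [BMat, one_sub_smul_mulVec_one (PAct_mulVec_one hP S), mulVec_smul]
      _ = NMat β P S *ᵥ 1 := by
          rw [mulVec_mulVec, AMat, HMat, nonsing_inv_mul_cancel_right _ _ hS]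
      _ = (1 - β) • 1 := one_sub_smul_mulVec_one (PPas_mulVec_one hP S) β
  exact smul_right_injective _ (sub_ne_zero.2 hβ.symm) hN

end Tableau

section Marginals

variable {N : Type*} [Fintype N] [DecidableEq N] {P : Matrix N N ℝ} {β : ℝ} {S : Finset N}
  {i j : N}

theorem fRew_of_notMem (hβ : β ≠ 1) (hS : IsUnit (BMat β P S).det) (R : N → ℝ) (hi : i ∉ S) :
    fRew β P R S i = 0 := by
  have hB : (BMat β P S *ᵥ fRew β P R S) i = 0 := by
    rw [fRew, HMat, mulVec_mulVec, mul_nonsing_inv _ hS, one_mulVec, if_neg hi]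
  have hBi : (BMat β P S *ᵥ fRew β P R S) i = (1 - β) * fRew β P R S i := by
    rw [BMat, sub_mulVec, smul_mulVec, one_mulVec, Pi.sub_apply, Pi.smul_apply, smul_eq_mul,
      mulVec, PAct_apply_of_notMem hi, ← mulVec, one_mulVec, sub_mul, one_mul]
  exact (mul_eq_zero.1 (hBi ▸ hB)).resolve_left (sub_ne_zero.2 hβ.symm)

theorem rMarg_of_notMem (hβ : β ≠ 1) (hS : IsUnit (BMat β P S).det) (R : N → ℝ) (hi : i ∉ S) :
    rMarg β P R S i = R i - ∑ k ∈ S, AMat β P S i k * R k := by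
  have hA : (NMat β P S *ᵥ fRew β P R S) i = ∑ k ∈ S, AMat β P S i k * R k := by
    rw [fRew, mulVec_mulVec, ← AMat]
    simp [mulVec, dotProduct]
  have hsum : (P *ᵥ fRew β P R S) i = ∑ k ∈ S, P i k * fRew β P R S k :=
    (Finset.sum_subset (Finset.subset_univ S) fun k _ hk => by
      rw [fRew_of_notMem hβ hS R hk, mul_zero]).symm
  have hN : (NMat β P S *ᵥ fRew β P R S) i = -(β * ∑ k ∈ S, P i k * fRew β P R S k) := by
    rw [NMat, sub_mulVec, smul_mulVec, one_mulVec, Pi.sub_apply, Pi.smul_apply, smul_eq_mul,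
      fRew_of_notMem hβ hS R hi, mulVec, PPas_apply_of_notMem hi, ← mulVec, hsum, zero_sub]
  rw [rMarg, if_neg hi, ← hA, hN, sub_neg_eq_add]

theorem rMarg_insert (hβ : β ≠ 1) (hj : j ∉ S) (hS : IsUnit (BMat β P S).det)
    (hT : IsUnit (BMat β P (insert j S)).det) (R : N → ℝ) (hi : i ∉ insert j S) :
    rMarg β P R (insert j S) i =
      rMarg β P R S i - AMat β P S i j / AMat β P S j j * rMarg β P R S j := by
  obtain ⟨hij, hiS⟩ : i ≠ j ∧ i ∉ S := by simpa using hi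
  set c := AMat β P S i j / AMat β P S j j
  have hsum : ∑ k ∈ S, AMat β P (insert j S) i k * R k =
      ∑ k ∈ S, AMat β P S i k * R k - c * ∑ k ∈ S, AMat β P S j k * R k := by
    rw [Finset.mul_sum, ← Finset.sum_sub_distrib]
    refine Finset.sum_congr rfl fun k hk => ?_
    rw [AMat_insert_apply hj hij hS hT, Function.update_of_ne (ne_of_mem_of_not_mem hk hj),
      Pi.sub_apply, Pi.smul_apply, smul_eq_mul]
    ring
  have hpivot : AMat β P (insert j S) i j = c := by
    rw [AMat_insert_apply hj hij hS hT, Function.update_self]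
  rw [rMarg_of_notMem hβ hT R hi, rMarg_of_notMem hβ hS R hiS, rMarg_of_notMem hβ hS R hj,
    Finset.sum_insert hj, hpivot, hsum]
  ring

theorem wMarg_eq_rMarg_one : wMarg β P S i = rMarg β P 1 S i :=
  rfl

theorem wMarg_eq_sum_compl (hP : P *ᵥ 1 = 1) (hβ : β ≠ 1) (hS : IsUnit (BMat β P S).det)
    (hi : i ∉ S) : wMarg β P S i = ∑ k ∈ Sᶜ, AMat β P S i k := by
  have hrow : ∑ k ∈ S, AMat β P S i k + ∑ k ∈ Sᶜ, AMat β P S i k = 1 := by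
    simpa [mulVec, dotProduct, Finset.sum_add_sum_compl] using
      congrFun (AMat_mulVec_one hP hβ hS) i
  rw [wMarg_eq_rMarg_one, rMarg_of_notMem hβ hS 1 hi]
  simpa only [Pi.one_apply, mul_one] using sub_eq_of_eq_add' hrow.symm

end Marginals

section StateElimination

variable {N : Type*} [Fintype N] [DecidableEq N] {P : Matrix N N ℝ} {β : ℝ} {S : Finset N}
  {i j k : N}

theorem one_sub_Ptil_self : 1 - Ptil β P S i i = (1 - β) * AMat β P S i i := by
  rw [Ptil, if_pos rfl, sub_sub_cancel]

theorem Ptil_of_ne (hik : i ≠ k) : Ptil β P S i k = -((1 - β) * AMat β P S i k) := by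
  rw [Ptil, if_neg hik, zero_sub]

theorem Ptil_div_one_sub_Ptil_self (hβ : β ≠ 1) (hij : i ≠ j) :
    Ptil β P S i j / (1 - Ptil β P S j j) = -(AMat β P S i j / AMat β P S j j) := by
  rw [Ptil_of_ne hij, one_sub_Ptil_self, neg_div, mul_div_mul_left _ _ (sub_ne_zero.2 hβ.symm)]

theorem Ptil_insert (hβ : β ≠ 1) (hj : j ∉ S) (hS : IsUnit (BMat β P S).det)
    (hT : IsUnit (BMat β P (insert j S)).det) (hij : i ≠ j) (hkj : k ≠ j) :
    Ptil β P (insert j S) i k =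
      Ptil β P S i k + Ptil β P S i j * Ptil β P S j k / (1 - Ptil β P S j j) := by
  rw [mul_div_right_comm, Ptil_div_one_sub_Ptil_self hβ hij, Ptil_of_ne hkj.symm, Ptil, Ptil,
    AMat_insert_apply hj hij hS hT, Function.update_of_ne hkj, Pi.sub_apply, Pi.smul_apply,
    smul_eq_mul]
  ring

theorem sum_compl_Ptil (hP : P *ᵥ 1 = 1) (hβ : β ≠ 1) (hS : IsUnit (BMat β P S).det)
    (hi : i ∉ S) : ∑ k ∈ Sᶜ, Ptil β P S i k = 1 - (1 - β) * wMarg β P S i := by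
  simp only [Ptil, Finset.sum_sub_distrib, Finset.sum_ite_eq, Finset.mem_compl, hi,
    not_false_eq_true, if_true, ← Finset.mul_sum, wMarg_eq_sum_compl hP hβ hS hi]

end StateElimination

theorem stmt17_general {N : Type*} [Fintype N] [DecidableEq N]
    (P : Matrix N N ℝ) (hP : P *ᵥ 1 = 1) (β : ℝ) (hβ : β ≠ 1) (R : N → ℝ)
    (S : Finset N) (j : N) (hj : j ∉ S)
    (hS : IsUnit (BMat β P S).det) (hT : IsUnit (BMat β P (insert j S)).det) :
    (1 - Ptil β P S j j = (1 - β) * AMat β P S j j ∧ 1 - Ptil β P S j j ≠ 0) ∧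
    (∀ i k : N, i ∉ insert j S → k ∉ insert j S →
      (if i = k then (1:ℝ) else 0) - (1 - β) * AMat β P (insert j S) i k
        = Ptil β P S i k + Ptil β P S i j * Ptil β P S j k / (1 - Ptil β P S j j)) ∧
    (∀ i : N, i ∉ insert j S →
      (1 - β) * rMarg β P R (insert j S) i
        = (1 - β) * rMarg β P R S i
          + (1 - β) * rMarg β P R S j * Ptil β P S i j / (1 - Ptil β P S j j)) ∧
    (∀ i : N, i ∉ S →
      ∑ k ∈ Sᶜ, Ptil β P S i k = 1 - (1 - β) * wMarg β P S i) := by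
  have hne {i : N} (hi : i ∉ insert j S) : i ≠ j := fun h => hi (h ▸ Finset.mem_insert_self j S)
  refine ⟨⟨one_sub_Ptil_self, ?_⟩, fun i k hi hk => ?_, fun i hi => ?_,
    fun i hi => sum_compl_Ptil hP hβ hS hi⟩
  · rw [one_sub_Ptil_self]
    exact mul_ne_zero (sub_ne_zero.2 hβ.symm) (AMat_self_ne_zero hj hS hT)
  · exact Ptil_insert hβ hj hS hT (hne hi) (hne hk)
  · rw [rMarg_insert hβ hj hS hT R hi, mul_div_assoc, Ptil_div_one_sub_Ptil_self hβ (hne hi)]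
    ring

/-- one step of Proposition 8, equation (32): the state-elimination
update reproduces the conventional-pivoting quantities. -/
theorem stmt17 {N : Type*} [Fintype N] [DecidableEq N] [Nonempty N]
    (P : Matrix N N ℝ) (hP0 : ∀ i j, 0 ≤ P i j) (hP1 : ∀ i, ∑ j, P i j = 1)
    (β : ℝ) (hβ0 : 0 < β) (hβ1 : β < 1) (R : N → ℝ)
    (S : Finset N) (j : N) (hj : j ∉ S) :
    (1 - Ptil β P S j j = (1 - β) * AMat β P S j j ∧ 1 - Ptil β P S j j ≠ 0) ∧
    (∀ i k : N, i ∉ insert j S → k ∉ insert j S →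
      (if i = k then (1:ℝ) else 0) - (1 - β) * AMat β P (insert j S) i k
        = Ptil β P S i k + Ptil β P S i j * Ptil β P S j k / (1 - Ptil β P S j j)) ∧
    (∀ i : N, i ∉ insert j S →
      (1 - β) * rMarg β P R (insert j S) i
        = (1 - β) * rMarg β P R S i
          + (1 - β) * rMarg β P R S j * Ptil β P S i j / (1 - Ptil β P S j j)) ∧
    (∀ i : N, i ∉ S →
      ∑ k ∈ Sᶜ, Ptil β P S i k = 1 - (1 - β) * wMarg β P S i) := by
  have hP : P ∈ rowStochastic ℝ N := mem_rowStochastic_iff_sum.2 ⟨hP0, hP1⟩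
  have hB := isUnit_det_BMat hP (abs_lt.2 ⟨by linarith, hβ1⟩)
  exact stmt17_general P hP.2 β hβ1.ne R S j hj (hB S) (hB (insert j S))
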